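/- arXiv:1210.5838 — 2 statements merged into one kernel-verified Lean document; each statement's English description precedes it below -/
import Mathlib

section
/- Let K be a finite extension of ℚ_p with residue field 𝔽, let 𝔽̄ be an algebraic closure of 𝔽, and L ∈ M_g(𝔽). Let ρ be the rank of the matrix L·L^{(p)}⋯L^{(p^{g−1})}, where L^{(p^i)} is obtained from L by raising all entries to the p^i-th power. Then the number of vectors u ∈ 𝔽̄^g satisfying u + L·u^{(p)} = 0 (where u^{(p)} raises each coordinate to the p-th power) is exactly p^ρ. -/
open Polynomial

/-- The rank of a square matrix over a field is unchanged by extension of scalars. -/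
theorem Matrix.rank_map_algebraMap {n K E : Type*} [Fintype n] [DecidableEq n] [Field K] [Field E]
    [Algebra K E] (A : Matrix n n K) : (A.map (algebraMap K E)).rank = A.rank := by
  classical
  obtain ⟨V, U, e, hV, hU, h⟩ := A.exists_rank_normal_form
  have hV' : IsUnit (V.map (algebraMap K E)).det :=
    (Matrix.isUnit_iff_isUnit_det _).1 (hV.map (algebraMap K E).mapMatrix)
  have hU' : IsUnit (U.map (algebraMap K E)).det :=
    (Matrix.isUnit_iff_isUnit_det _).1 (hU.map (algebraMap K E).mapMatrix)
  have h' : V.map (algebraMap K E) * A.map (algebraMap K E) * U.map (algebraMap K E) =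
      (Matrix.diagonal (Sum.elim (fun _ => (1 : E)) (fun _ => 0))).submatrix e e := by
    rw [← Matrix.map_mul, ← Matrix.map_mul, h]
    ext i j
    rcases hi : e i with a | a <;> rcases hj : e j with b | b <;>
      simp [hi, hj, Matrix.diagonal_apply, Matrix.one_apply, apply_ite (algebraMap K E)]
  rw [← Matrix.rank_mul_eq_right_of_isUnit_det _ (A.map (algebraMap K E)) hV',
    ← Matrix.rank_mul_eq_left_of_isUnit_det _ _ hU', h', Matrix.rank_submatrix,
    Matrix.rank_diagonal, Fintype.card_congr (Equiv.subtypeSum ..), Fintype.card_sum]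
  simp

section

variable {k : Type*} [Field k] (p : ℕ) [Fact p.Prime]

/-- The polynomials giving the coordinates of a fixed vector `x` of a Frobenius-semilinear map on a
cyclic module with relation `a`, in terms of the last coordinate of `x`. -/
noncomputable def cyclicFixedCoeff (a : ℕ → k) : ℕ → k[X]
  | 0 => C (a 0) * X ^ p
  | i + 1 => cyclicFixedCoeff a i ^ p + C (a (i + 1)) * X ^ p

theorem X_pow_dvd_cyclicFixedCoeff (a : ℕ → k) (i : ℕ) : X ^ p ∣ cyclicFixedCoeff p a i := by
  induction i with
  | zero => exact dvd_mul_left _ _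
  | succ i ih =>
    exact dvd_add (ih.trans (dvd_pow_self _ (Fact.out : p.Prime).ne_zero)) (dvd_mul_left _ _)

theorem le_natDegree_cyclicFixedCoeff (a : ℕ → k) (i : ℕ) :
    (cyclicFixedCoeff p a i = 0 ∧ ∀ j ≤ i, a j = 0) ∨ p ≤ (cyclicFixedCoeff p a i).natDegree := by
  have hp := (Fact.out : p.Prime).two_le
  induction i with
  | zero =>
    by_cases h : a 0 = 0
    · simp [cyclicFixedCoeff, h]
    · right; simp [cyclicFixedCoeff, natDegree_C_mul_X_pow p _ h]
  | succ i ih =>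
    rcases ih with ⟨h0, h1⟩ | h
    · by_cases h : a (i + 1) = 0
      · left
        refine ⟨by simp [cyclicFixedCoeff, h, h0, (Fact.out : p.Prime).ne_zero], fun j hj => ?_⟩
        rcases Nat.le_succ_iff.1 hj with hj | rfl
        exacts [h1 j hj, h]
      · right
        simp [cyclicFixedCoeff, h0, (Fact.out : p.Prime).ne_zero, natDegree_C_mul_X_pow p _ h]
    · right
      have hlt : (C (a (i + 1)) * X ^ p).natDegree < (cyclicFixedCoeff p a i ^ p).natDegree := by
        rw [natDegree_pow]
        have := natDegree_C_mul_X_pow_le (a (i + 1)) p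
        nlinarith
      rw [cyclicFixedCoeff, natDegree_add_eq_left_of_natDegree_lt hlt, natDegree_pow]
      nlinarith

theorem exists_ne_zero_eval_cyclicFixedCoeff [IsAlgClosed k] (a : ℕ → k) (i : ℕ)
    (h : ∃ j ≤ i, a j ≠ 0) : ∃ y : k, y ≠ 0 ∧ (cyclicFixedCoeff p a i).eval y = y := by
  have hp := (Fact.out : p.Prime).two_le
  obtain ⟨j, hj, haj⟩ := h
  have hdeg : p ≤ (cyclicFixedCoeff p a i).natDegree :=
    (le_natDegree_cyclicFixedCoeff p a i).resolve_left fun h' => haj (h'.2 j hj)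
  obtain ⟨q, hq⟩ := (pow_dvd_pow X hp).trans (X_pow_dvd_cyclicFixedCoeff p a i)
  have hq0 : q ≠ 0 := by
    rintro rfl
    rw [hq, mul_zero, natDegree_zero] at hdeg
    omega
  have hd : (X * q - 1).natDegree = q.natDegree + 1 := by
    rw [← natDegree_X_mul hq0]
    exact natDegree_sub_C (a := (1 : k))
  obtain ⟨y, hy⟩ := IsAlgClosed.exists_root (X * q - 1) fun h0 => by
    have h0' := natDegree_eq_zero_iff_degree_le_zero.2 h0.le
    omega
  have hy' : y * q.eval y = 1 := by simpa [sub_eq_zero] using hy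
  refine ⟨y, left_ne_zero_of_mul_eq_one hy', ?_⟩
  rw [hq, eval_mul, eval_pow, eval_X, sq, mul_assoc, hy', mul_one]

/-- Artin–Schreier equations are solvable over an algebraically closed field. -/
theorem exists_sub_pow_eq [IsAlgClosed k] (c : k) : ∃ d : k, d - d ^ p = c := by
  have hp := (Fact.out : p.Prime).one_lt
  have hd : (X ^ p - X + C c : k[X]).natDegree = p := by
    rw [natDegree_add_C, FiniteField.X_pow_card_sub_X_natDegree_eq k hp]
  obtain ⟨d, hd⟩ := IsAlgClosed.exists_root (X ^ p - X + C c) fun h0 => by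
    have h0' := natDegree_eq_zero_iff_degree_le_zero.2 h0.le
    omega
  refine ⟨d, ?_⟩
  have : d ^ p - d + c = 0 := by simpa using hd
  linear_combination -this

variable {V : Type*} [AddCommGroup V] [Module k V]
  [FiniteDimensional k V]

/-- In a finite-dimensional space, some iterate of `v` lies in the span of the previous ones,
and the first such occurs after at most `finrank` steps. -/
theorem exists_iterate_mem_span (f : V → V) (v : V) :
    ∃ m ≤ Module.finrank k V,
      (∀ l < m, f^[l] v ∉ Submodule.span k (Set.range fun i : Fin l => f^[i] v)) ∧
      f^[m] v ∈ Submodule.span k (Set.range fun i : Fin m => f^[i] v) := by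
  classical
  have key : ∀ m, (∀ l < m, f^[l] v ∉ Submodule.span k (Set.range fun i : Fin l => f^[i] v)) →
      LinearIndependent k (fun i : Fin m => f^[i] v) := by
    intro m
    induction m with
    | zero => intro _; exact linearIndependent_empty_type
    | succ m ih =>
      intro h
      exact linearIndependent_finSucc'.2 ⟨ih fun l hl => h l (by omega), h m (by omega)⟩
  have hex : ∃ m, f^[m] v ∈ Submodule.span k (Set.range fun i : Fin m => f^[i] v) := by
    by_contra! h
    simpa using (key (Module.finrank k V + 1) fun l _ => h l).fintype_card_le_finrank
  refine ⟨Nat.find hex, ?_, fun l hl => Nat.find_min hex hl, Nat.find_spec hex⟩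
  simpa using (key (Nat.find hex) fun l hl => Nat.find_min hex hl).fintype_card_le_finrank

/-- A Frobenius-semilinear map without nonzero fixed vector is nilpotent. -/
theorem iterate_finrank_eq_zero [CharP k p] [IsAlgClosed k]
    (φ : V →ₛₗ[frobenius k p] V) (hφ : ∀ x, φ x = x → x = 0) (v : V) :
    φ^[Module.finrank k V] v = 0 := by
  obtain ⟨m, hm, hmin, hmem⟩ := exists_iterate_mem_span (k := k) φ v
  obtain ⟨a', ha'⟩ := (Submodule.mem_span_range_iff_exists_fun k).1 hmem
  obtain ⟨a, ha⟩ : ∃ a : ℕ → k, ∑ i ∈ Finset.range m, a i • φ^[i] v = φ^[m] v :=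
    ⟨fun i => if h : i < m then a' ⟨i, h⟩ else 0, by
      rw [← ha', Finset.sum_range]; simp⟩
  by_cases h0 : ∀ i < m, a i = 0
  · have hz : φ^[m] v = 0 := by
      rw [← ha]
      exact Finset.sum_eq_zero fun i hi => by simp [h0 i (Finset.mem_range.1 hi)]
    obtain ⟨d, hd⟩ := Nat.exists_eq_add_of_le' hm
    rw [hd, Function.iterate_add_apply, hz]
    exact Function.iterate_fixed (map_zero φ) d
  · exfalso
    push Not at h0
    obtain ⟨j, hj, haj⟩ := h0
    obtain ⟨n, rfl⟩ : ∃ n, m = n + 1 := ⟨m - 1, by omega⟩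
    obtain ⟨y, hy0, hy⟩ := exists_ne_zero_eval_cyclicFixedCoeff p a n ⟨j, by omega, haj⟩
    set c : ℕ → k := fun i => (cyclicFixedCoeff p a i).eval y with hc
    have hcn : c n = y := hy
    have hc0 : c 0 = a 0 * y ^ p := by simp [hc, cyclicFixedCoeff]
    have hcs : ∀ i, c (i + 1) = c i ^ p + a (i + 1) * y ^ p := fun i => by
      simp [hc, cyclicFixedCoeff]
    have hfix : φ (∑ i ∈ Finset.range (n + 1), c i • φ^[i] v) =
        ∑ i ∈ Finset.range (n + 1), c i • φ^[i] v := by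
      have hstep : ∀ i, φ (c i • φ^[i] v) = c i ^ p • φ^[i + 1] v := fun i => by
        rw [LinearMap.map_smulₛₗ, Function.iterate_succ_apply', frobenius_def]
      simp only [map_sum, hstep]
      rw [Finset.sum_range_succ, hcn, ← ha, Finset.sum_range_succ' _ n, smul_add, Finset.smul_sum,
        Finset.sum_range_succ' _ n, ← add_assoc, ← Finset.sum_add_distrib, hc0, smul_smul,
        mul_comm (y ^ p)]
      congr 1
      refine Finset.sum_congr rfl fun i _ => ?_
      rw [hcs, add_smul, smul_smul, mul_comm (y ^ p)]
    have hz := hφ _ hfix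
    rw [Finset.sum_range_succ, hcn, Finset.sum_range] at hz
    refine hmin n (by omega) ?_
    rw [← Submodule.smul_mem_iff _ hy0, eq_neg_of_add_eq_zero_right hz]
    exact neg_mem (Submodule.sum_mem _ fun i _ =>
      Submodule.smul_mem _ _ (Submodule.subset_span ⟨i, rfl⟩))

/-- The span of the fixed vectors contains the image of the `n`-th iterate, `n` the dimension. -/
theorem iterate_finrank_mem_span_fixedPoints [CharP k p] [IsAlgClosed k]
    (φ : V →ₛₗ[frobenius k p] V) (v : V) :
    φ^[Module.finrank k V] v ∈ Submodule.span k (Function.fixedPoints φ) := by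
  set S := Submodule.span k (Function.fixedPoints φ)
  have hle : S ≤ S.comap φ :=
    Submodule.span_le.2 fun x hx => by
      have hx' : φ x = x := hx
      simpa [hx'] using Submodule.subset_span hx
  have hsurj : ∀ s ∈ S, ∃ t ∈ S, t - φ t = s := by
    intro s hs
    induction hs using Submodule.closure_induction with
    | zero => exact ⟨0, zero_mem _, by simp⟩
    | add x y _ _ hx hy =>
      obtain ⟨s, hs, rfl⟩ := hx
      obtain ⟨t, ht, rfl⟩ := hy
      exact ⟨s + t, add_mem hs ht, by rw [map_add]; abel⟩
    | smul_mem c x hx =>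
      obtain ⟨d, hd⟩ := exists_sub_pow_eq p c
      refine ⟨d • x, Submodule.smul_mem _ _ (Submodule.subset_span hx), ?_⟩
      rw [LinearMap.map_smulₛₗ, hx, frobenius_def, ← sub_smul, hd]
  have hquot : ∀ x, S.mapQ S φ hle x = x → x = 0 := by
    intro x hx
    obtain ⟨v, rfl⟩ := S.mkQ_surjective x
    have hs : φ v - v ∈ S := (Submodule.Quotient.eq S).1 hx
    obtain ⟨t, ht, hts⟩ := hsurj _ hs
    have hvt : v + t ∈ S := Submodule.subset_span <| by
      rw [Function.mem_fixedPoints_iff, map_add, add_comm v, ← sub_eq_sub_iff_add_eq_add, ← hts]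
    exact (Submodule.Quotient.mk_eq_zero S).2 ((Submodule.add_mem_iff_left S ht).1 hvt)
  have hiter : ∀ n v, (S.mapQ S φ hle)^[n] (S.mkQ v) = S.mkQ (φ^[n] v) := fun n v =>
    ((Function.Semiconj.iterate_right (f := S.mkQ) (fun x => rfl) n) v).symm
  have hzero := iterate_finrank_eq_zero p (S.mapQ S φ hle) hquot (S.mkQ v)
  rw [hiter] at hzero
  obtain ⟨d, hd⟩ := Nat.exists_eq_add_of_le' (Submodule.finrank_quotient_le S)
  have hmem : φ^[Module.finrank k (V ⧸ S)] v ∈ S := (Submodule.Quotient.mk_eq_zero S).1 hzero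
  rw [hd, Function.iterate_add_apply]
  exact Set.MapsTo.iterate (f := φ) (s := (S : Set V)) hle d hmem

/-- A Frobenius-semilinear map has `p ^ d` fixed vectors, `d` being the dimension of their span. -/
theorem natCard_fixedPoints [CharP k p] (φ : V →ₛₗ[frobenius k p] V) :
    Nat.card (Function.fixedPoints φ) =
      p ^ Module.finrank k (Submodule.span k (Function.fixedPoints φ)) := by
  classical
  obtain ⟨b, hbF, hspan, hli⟩ := exists_linearIndependent k (Function.fixedPoints φ)
  have : Fintype b := hli.setFinite.fintype
  have hφ : ∀ c : b → k, φ (∑ i, c i • (i : V)) = ∑ i, c i ^ p • (i : V) := fun c => by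
    rw [map_sum]
    refine Finset.sum_congr rfl fun i _ => ?_
    rw [LinearMap.map_smulₛₗ, hbF i.2, frobenius_def]
  let F : (b → (⊥ : Subfield k)) → Function.fixedPoints φ := fun c =>
    ⟨∑ i, (c i : k) • (i : V), by
      rw [Function.mem_fixedPoints_iff, hφ]
      exact Finset.sum_congr rfl fun i _ => by
        rw [(Subfield.mem_bot_iff_pow_eq_self k p).1 (c i).2]⟩
  have hF : Function.Bijective F := by
    refine ⟨fun c d h => ?_, fun x => ?_⟩
    · funext i
      exact Subtype.ext <| congrFun (hli.fintypeLinearCombination_injective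
        (a₁ := fun i => (c i : k)) (a₂ := fun i => (d i : k)) (congrArg Subtype.val h)) i
    · have hx : (x : V) ∈ Submodule.span k (Set.range ((↑) : b → V)) := by
        rw [Subtype.range_coe, hspan]
        exact Submodule.subset_span x.2
      obtain ⟨c, hc⟩ := (Submodule.mem_span_range_iff_exists_fun k).1 hx
      have hcp : (fun i => c i ^ p) = c :=
        hli.fintypeLinearCombination_injective <| by
          simpa only [Fintype.linearCombination_apply, hc, ← hφ] using x.2.eq
      exact ⟨fun i => ⟨c i, (Subfield.mem_bot_iff_pow_eq_self k p).2 (congrFun hcp i)⟩,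
        Subtype.ext hc⟩
  rw [← Nat.card_eq_of_bijective F hF, Nat.card_fun, Subfield.card_bot k p, ← hspan,
    finrank_span_set_eq_card hli, Nat.card_eq_fintype_card, Set.toFinset_card]

end

theorem iterate_mulVec_pow {K : Type*} [Field K] (p : ℕ) [Fact p.Prime] [CharP K p]
    {n : Type*} [Fintype n] [DecidableEq n] (M : Matrix n n K) (m : ℕ) (u : n → K) :
    (fun w : n → K => -(M.mulVec fun j => w j ^ p))^[m] u =
      (-1 : K) ^ m • (((List.range m).map fun i => M.map fun x => x ^ p ^ i).prod.mulVec
        fun j => u j ^ p ^ m) := by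
  induction m generalizing u with
  | zero => simp
  | succ m ih =>
    have h : (fun j => (-(M.mulVec fun j => u j ^ p)) j ^ p ^ m) =
        -((M.map fun x => x ^ p ^ m).mulVec fun j => u j ^ p ^ (m + 1)) := by
      funext i
      have := RingHom.map_mulVec (iterateFrobenius K p m) M (fun j => u j ^ p) i
      simp only [← iterateFrobenius_def] at this ⊢
      simp only [Pi.neg_apply, map_neg, this]
      congr 2
      funext j
      simp [iterateFrobenius_def, pow_succ', pow_mul]
    rw [Function.iterate_succ_apply, ih, h, List.range_succ, List.map_append, List.prod_append,
      List.map_singleton, List.prod_singleton, ← Matrix.mulVec_mulVec, Matrix.mulVec_neg,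
      smul_neg, pow_succ (-1 : K), mul_neg_one, neg_smul]

/-- **Hasse–Witt.**  Let `𝔽` be the (finite) residue field of a
finite extension of `ℚ_p`, `Ω` an algebraic closure of `𝔽`, and
`L ∈ M_g(𝔽)`.  Let `ρ` be the rank of `L·L^{(p)}⋯L^{(p^{g−1})}`, where
`L^{(p^i)}` raises every entry of `L` to the `p^i`-th power.  Then the number
of `u ∈ Ω^g` with `u + L·u^{(p)} = 0` is exactly `p^ρ`. -/
theorem hasse_witt_count
    (p : ℕ) [Fact p.Prime] (g : ℕ)
    (𝔽 : Type*) [Field 𝔽] [Fintype 𝔽] [CharP 𝔽 p]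
    (Ω : Type*) [Field Ω] [Algebra 𝔽 Ω] [IsAlgClosure 𝔽 Ω]
    (L : Matrix (Fin g) (Fin g) 𝔽) :
    Nat.card {u : Fin g → Ω //
        (∀ i, u i + (L.map (algebraMap 𝔽 Ω)).mulVec (fun j => u j ^ p) i = 0)} =
      p ^ Matrix.rank (((List.range g).map fun k => L.map fun x => x ^ p ^ k).prod) := by
  have : IsAlgClosed Ω := IsAlgClosure.isAlgClosed 𝔽
  have : CharP Ω p := charP_of_injective_algebraMap (algebraMap 𝔽 Ω).injective p
  set M := L.map (algebraMap 𝔽 Ω) with hM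
  let φ : (Fin g → Ω) →ₛₗ[frobenius Ω p] (Fin g → Ω) :=
    { toFun := fun w => -(M.mulVec fun j => w j ^ p)
      map_add' := fun x y => by
        rw [← neg_add, ← Matrix.mulVec_add]
        congr 2
        funext j
        exact add_pow_char (x j) (y j) p
      map_smul' := fun c x => by
        rw [smul_neg, ← Matrix.mulVec_smul]
        congr 2
        funext j
        exact mul_pow c (x j) p }
  set A := ((List.range g).map fun k => M.map fun x => x ^ p ^ k).prod with hA
  have hAmap : A = (((List.range g).map fun k => L.map fun x => x ^ p ^ k).prod).map
      (algebraMap 𝔽 Ω) := by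
    rw [← RingHom.mapMatrix_apply, map_list_prod, List.map_map, hA]
    congr 2
    funext k
    ext i j
    simp [hM]
  have hiter : ∀ u, φ^[g] u = (-1 : Ω) ^ g • A.mulVec fun j => u j ^ p ^ g :=
    iterate_mulVec_pow p M g
  have hspan : Submodule.span Ω (Function.fixedPoints φ) = LinearMap.range A.mulVecLin := by
    apply le_antisymm
    · refine Submodule.span_le.2 fun u hu => ?_
      rw [← Function.iterate_fixed hu g, hiter]
      exact Submodule.smul_mem _ _ ⟨_, rfl⟩
    · rintro _ ⟨w, rfl⟩
      have hroot : ∀ j, ∃ z : Ω, z ^ p ^ g = w j := fun j =>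
        IsAlgClosed.exists_pow_nat_eq (w j) (pow_pos (Fact.out : p.Prime).pos g)
      choose u hu using hroot
      have h := iterate_finrank_mem_span_fixedPoints p φ u
      rw [Module.finrank_fin_fun, hiter, funext hu] at h
      exact (Submodule.smul_mem_iff _ (pow_ne_zero g (neg_ne_zero.2 one_ne_zero))).1 h
  rw [← Matrix.rank_map_algebraMap (E := Ω), ← hAmap, Matrix.rank, ← hspan,
    ← natCard_fixedPoints p φ]
  refine Nat.card_congr (Equiv.subtypeEquivRight fun u => ?_)
  rw [Function.mem_fixedPoints_iff, eq_comm]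
  exact funext_iff.symm.trans eq_neg_iff_add_eq_zero.symm
end

section
/- Let K be a finite extension of ℚ_p and l(X) = ∑_{k=0}^∞ (e_k/p^k) X^{p^k} ∈ K[[X]] with e_k ∈ O_K^* for all k ≥ 0. For n ≥ 1, let T_n := {π ∈ K : |π| ≤ |p|^{1/(p^n − p^{n−1})}, l(π) = 0} (roots in a fixed algebraic closure, intersected with the disk). Then, over a sufficiently large finite extension of K: |T_n| = p^n; every nonzero π ∈ T_n satisfies |π| = |p|^{1/(p^s − p^{s−1})} for some 1 ≤ s ≤ n; and for each such s, the number of π ∈ T_n with |π| = |p|^{1/(p^s−p^{s−1})} is exactly p^s − p^{s−1}. -/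
open scoped Classical

open Filter Topology

/-- The series `∑ (e_k / p^k) x^(p^k)`. -/
noncomputable def logSeries {Ω : Type*} [NormedField Ω] (p : ℕ) (e : ℕ → Ω) (x : Ω) : Ω :=
  ∑' k : ℕ, e k / (p : Ω) ^ k * x ^ p ^ k

/-- The radii at which two consecutive terms of the series have the same size, preceded by `0`. -/
noncomputable def criticalRadius (p : ℕ) : ℕ → ℝ
  | 0 => 0
  | s + 1 => (p : ℝ)⁻¹ ^ ((1 : ℝ) / ((p : ℝ) ^ (s + 1) - (p : ℝ) ^ s))

section Radius

variable {p : ℕ}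

theorem pow_lt_pow_succ_of_prime (hp : p.Prime) (s : ℕ) : p ^ s < p ^ (s + 1) :=
  Nat.pow_lt_pow_right hp.one_lt s.lt_succ_self

theorem one_lt_cast_of_prime (hp : p.Prime) : (1 : ℝ) < p := by exact_mod_cast hp.one_lt

theorem criticalRadius_nonneg (p s : ℕ) : 0 ≤ criticalRadius p s := by
  cases s with
  | zero => exact le_rfl
  | succ s => exact Real.rpow_nonneg (by positivity) _

theorem criticalRadius_succ_pos (hp : p.Prime) (s : ℕ) : 0 < criticalRadius p (s + 1) := by
  have := hp.pos
  exact Real.rpow_pos_of_pos (by positivity) _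

theorem criticalRadius_succ_pow (hp : p.Prime) (s : ℕ) :
    criticalRadius p (s + 1) ^ (p ^ (s + 1) - p ^ s) = (p : ℝ)⁻¹ := by
  have h := pow_lt_pow_succ_of_prime hp s
  have hc : ((p ^ (s + 1) - p ^ s : ℕ) : ℝ) = (p : ℝ) ^ (s + 1) - (p : ℝ) ^ s := by
    rw [Nat.cast_sub h.le]; push_cast; rfl
  rw [criticalRadius, ← hc, one_div]
  exact Real.rpow_inv_natCast_pow (by positivity) (by omega)

theorem lt_criticalRadius_succ_iff (hp : p.Prime) (s : ℕ) {r : ℝ} (hr : 0 ≤ r) :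
    r < criticalRadius p (s + 1) ↔ p * r ^ (p ^ (s + 1) - p ^ s) < 1 := by
  have h := pow_lt_pow_succ_of_prime hp s
  have hp0 : (0 : ℝ) < p := by exact_mod_cast hp.pos
  rw [← pow_lt_pow_iff_left₀ hr (criticalRadius_nonneg _ _) (n := p ^ (s + 1) - p ^ s) (by omega),
    criticalRadius_succ_pow hp, ← one_div, lt_div_iff₀ hp0, mul_comm]

theorem criticalRadius_lt_succ (hp : p.Prime) (s : ℕ) :
    criticalRadius p s < criticalRadius p (s + 1) := by
  cases s with
  | zero => exact criticalRadius_succ_pos hp 0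
  | succ s =>
    rw [criticalRadius, criticalRadius]
    have h1 := one_lt_cast_of_prime hp
    have hs : (0 : ℝ) < (p : ℝ) ^ (s + 1) - (p : ℝ) ^ s :=
      sub_pos.2 (pow_lt_pow_right₀ h1 s.lt_succ_self)
    refine Real.rpow_lt_rpow_of_exponent_gt (by positivity) (inv_lt_one_of_one_lt₀ h1) ?_
    refine one_div_lt_one_div_of_lt hs ?_
    have : (p : ℝ) ^ (s + 1 + 1) - (p : ℝ) ^ (s + 1) = p * ((p : ℝ) ^ (s + 1) - (p : ℝ) ^ s) := by
      ring
    rw [this]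
    exact lt_mul_of_one_lt_left hs h1

theorem criticalRadius_strictMono (hp : p.Prime) : StrictMono (criticalRadius p) :=
  strictMono_nat_of_lt_succ (criticalRadius_lt_succ hp)

theorem criticalRadius_lt_one (hp : p.Prime) (s : ℕ) : criticalRadius p s < 1 := by
  cases s with
  | zero => exact one_pos
  | succ s =>
    have h1 := one_lt_cast_of_prime hp
    exact Real.rpow_lt_one (by positivity) (inv_lt_one_of_one_lt₀ h1)
      (one_div_pos.2 (sub_pos.2 (pow_lt_pow_right₀ h1 s.lt_succ_self)))

theorem mul_pow_pow_succ (hp : p.Prime) (r : ℝ) (k : ℕ) :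
    (p : ℝ) ^ (k + 1) * r ^ p ^ (k + 1) =
      (p * r ^ (p ^ (k + 1) - p ^ k)) * ((p : ℝ) ^ k * r ^ p ^ k) := by
  have h := pow_lt_pow_succ_of_prime hp k
  have : r ^ p ^ (k + 1) = r ^ (p ^ (k + 1) - p ^ k) * r ^ p ^ k := by
    rw [← pow_add, Nat.sub_add_cancel h.le]
  rw [this]; ring

/-- Between two consecutive critical radii one term strictly dominates all others. -/
theorem mul_pow_pow_lt (hp : p.Prime) {s : ℕ} {r : ℝ} (h1 : criticalRadius p s < r)
    (h2 : r < criticalRadius p (s + 1)) {k : ℕ} (hk : k ≠ s) :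
    (p : ℝ) ^ k * r ^ p ^ k < (p : ℝ) ^ s * r ^ p ^ s := by
  have hr : 0 < r := (criticalRadius_nonneg p s).trans_lt h1
  have hp0 : (0 : ℝ) < p := by exact_mod_cast hp.pos
  have hpos : ∀ j, 0 < (p : ℝ) ^ j * r ^ p ^ j := fun j => by positivity
  rcases lt_or_gt_of_ne hk with hk | hk
  · have step : ∀ j < s, (p : ℝ) ^ j * r ^ p ^ j < (p : ℝ) ^ (j + 1) * r ^ p ^ (j + 1) := by
      intro j hj
      have : criticalRadius p (j + 1) < r :=
        ((criticalRadius_strictMono hp).monotone hj).trans_lt h1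
      rw [mul_pow_pow_succ hp]
      refine lt_mul_of_one_lt_left (hpos j) ?_
      rw [← pow_lt_pow_iff_left₀ (criticalRadius_nonneg _ _) hr.le
        (n := p ^ (j + 1) - p ^ j) (by have := pow_lt_pow_succ_of_prime hp j; omega),
        criticalRadius_succ_pow hp, ← one_div, div_lt_iff₀ hp0, mul_comm] at this
      exact this
    have := strictMonoOn_of_lt_add_one (f := fun j : ℕ => (p : ℝ) ^ j * r ^ p ^ j)
      (Set.ordConnected_Iic (a := s)) (fun j _ _ hj => step j hj)
    exact this hk.le (Set.mem_Iic.2 le_rfl) hk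
  · have step : ∀ j, s ≤ j → (p : ℝ) ^ (j + 1) * r ^ p ^ (j + 1) < (p : ℝ) ^ j * r ^ p ^ j := by
      intro j hj
      have : r < criticalRadius p (j + 1) :=
        h2.trans_le ((criticalRadius_strictMono hp).monotone (by omega))
      rw [mul_pow_pow_succ hp]
      exact mul_lt_of_lt_one_left (hpos j) ((lt_criticalRadius_succ_iff hp j hr.le).1 this)
    have := strictAntiOn_of_add_one_lt (f := fun j : ℕ => (p : ℝ) ^ j * r ^ p ^ j)
      (Set.ordConnected_Ici (a := s)) (fun j _ hj _ => step j hj)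
    exact this (Set.mem_Ici.2 le_rfl) hk.le hk

theorem tendsto_mul_pow_pow (hp : p.Prime) {r : ℝ} (h0 : 0 ≤ r) (h1 : r < 1) :
    Tendsto (fun k : ℕ => (p : ℝ) ^ k * r ^ p ^ k) atTop (𝓝 0) := by
  have := (tendsto_self_mul_const_pow_of_lt_one h0 h1).comp
    (tendsto_pow_atTop_atTop_of_one_lt hp.one_lt)
  simpa [Function.comp_def] using this

end Radius

section Ultrametric

theorem norm_div_prime_pow_mul {Ω : Type*} [NormedField Ω] {p : ℕ}
    (hpΩ : ‖(p : Ω)‖ = (p : ℝ)⁻¹) (a x : Ω) (k : ℕ) :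
    ‖a / (p : Ω) ^ k * x‖ = ‖a‖ * ((p : ℝ) ^ k * ‖x‖) := by
  rw [norm_mul, norm_div, norm_pow, hpΩ, inv_pow, div_inv_eq_mul, mul_assoc]

variable {Ω : Type*} [NormedField Ω] [IsUltrametricDist Ω]

theorem norm_tsum_eq_of_forall_lt {ι : Type*} {f : ι → Ω} (hf : Summable f) (s : ι)
    (h : ∀ k, k ≠ s → ‖f k‖ < ‖f s‖) : ‖∑' k, f k‖ = ‖f s‖ := by
  classical
  refine tendsto_nhds_unique (hf.hasSum.norm) (tendsto_const_nhds.congr' ?_)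
  filter_upwards [eventually_ge_atTop {s}] with t ht
  have hs : s ∈ t := by simpa using ht
  rw [← Finset.add_sum_erase t f hs]
  rcases (t.erase s).eq_empty_or_nonempty with h0 | h0
  · simp [h0]
  · obtain ⟨i, hi, hle⟩ := IsUltrametricDist.exists_norm_finsetSum_le_of_nonempty h0 f
    have hlt := hle.trans_lt (h i (Finset.ne_of_mem_erase hi))
    rw [IsUltrametricDist.norm_add_eq_max_of_norm_ne_norm hlt.ne', max_eq_left hlt.le]

theorem norm_sub_le_max_norm (x y : Ω) : ‖x - y‖ ≤ max ‖x‖ ‖y‖ := by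
  simpa [sub_eq_add_neg] using IsUltrametricDist.norm_add_le_max x (-y)

theorem norm_sub_eq_of_lt {x y : Ω} (h : ‖x‖ < ‖y‖) : ‖y - x‖ = ‖y‖ := by
  rw [sub_eq_add_neg, IsUltrametricDist.norm_add_eq_max_of_norm_ne_norm (by simpa using h.ne'),
    norm_neg, max_eq_left h.le]

variable {p : ℕ}

theorem summable_logSeries [CompleteSpace Ω] (hp : p.Prime) (hpΩ : ‖(p : Ω)‖ = (p : ℝ)⁻¹)
    {e : ℕ → Ω} (he : ∀ k, ‖e k‖ ≤ 1) {x : Ω} (hx : ‖x‖ < 1) :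
    Summable fun k : ℕ => e k / (p : Ω) ^ k * x ^ p ^ k := by
  refine NonarchimedeanAddGroup.summable_of_tendsto_cofinite_zero ?_
  rw [Nat.cofinite_eq_atTop]
  refine squeeze_zero_norm (fun k => ?_) (tendsto_mul_pow_pow hp (norm_nonneg x) hx)
  rw [norm_mul, norm_div, norm_pow, norm_pow, hpΩ, inv_pow, div_inv_eq_mul]
  gcongr
  exact mul_le_of_le_one_left (by positivity) (he k)

theorem norm_logSeries_of_between [CompleteSpace Ω] (hp : p.Prime)
    (hpΩ : ‖(p : Ω)‖ = (p : ℝ)⁻¹) {e : ℕ → Ω} (he : ∀ k, ‖e k‖ ≤ 1) {s : ℕ} (hs : ‖e s‖ = 1)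
    {x : Ω} (h1 : criticalRadius p s < ‖x‖) (h2 : ‖x‖ < criticalRadius p (s + 1)) :
    ‖logSeries p e x‖ = (p : ℝ) ^ s * ‖x‖ ^ p ^ s := by
  rw [logSeries, norm_tsum_eq_of_forall_lt
    (summable_logSeries hp hpΩ he (h2.trans (criticalRadius_lt_one hp _))) s,
    norm_div_prime_pow_mul hpΩ, hs, one_mul, norm_pow]
  intro k hk
  rw [norm_div_prime_pow_mul hpΩ, norm_div_prime_pow_mul hpΩ, hs, one_mul, norm_pow, norm_pow]
  exact (mul_le_of_le_one_left (by positivity) (he k)).trans_lt (mul_pow_pow_lt hp h1 h2 hk)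

theorem logSeries_ne_zero_of_between [CompleteSpace Ω] (hp : p.Prime)
    (hpΩ : ‖(p : Ω)‖ = (p : ℝ)⁻¹) {e : ℕ → Ω} (he : ∀ k, ‖e k‖ ≤ 1) {s : ℕ} (hs : ‖e s‖ = 1)
    {x : Ω} (h1 : criticalRadius p s < ‖x‖) (h2 : ‖x‖ < criticalRadius p (s + 1)) :
    logSeries p e x ≠ 0 := by
  have hx : 0 < ‖x‖ := (criticalRadius_nonneg p s).trans_lt h1
  have hp0 : (0 : ℝ) < p := by exact_mod_cast hp.pos
  rw [← norm_pos_iff, norm_logSeries_of_between hp hpΩ he hs h1 h2]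
  positivity

theorem norm_pow_prime_sub_le (hp : p.Prime) (hpΩ : ‖(p : Ω)‖ = (p : ℝ)⁻¹) {r c : ℝ}
    (hr : r ≤ 1) (hrc : r ≤ c) {x y : Ω} (hx : ‖x‖ ≤ r) (hy : ‖y‖ ≤ r)
    (hxy : p * ‖x - y‖ ^ (p - 1) ≤ c) :
    ‖x ^ p - y ^ p‖ ≤ (p : ℝ)⁻¹ * c * ‖x - y‖ := by
  have hp0 : (0 : ℝ) < p := by exact_mod_cast hp.pos
  have hd : ‖x - y‖ ≤ r := (norm_sub_le_max_norm x y).trans (max_le hx hy)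
  have key := add_pow_prime_eq hp y (x - y)
  rw [add_sub_cancel] at key
  rw [key, add_assoc, add_sub_cancel_left]
  refine (IsUltrametricDist.norm_add_le_max _ _).trans (max_le ?_ ?_)
  · rw [norm_pow, ← pow_sub_one_mul hp.ne_zero]
    gcongr
    rwa [← div_eq_inv_mul, le_div_iff₀ hp0, mul_comm]
  · rw [norm_mul, norm_mul, norm_mul, hpΩ]
    have : ‖∑ k ∈ Finset.Ioo 0 p, y ^ (k - 1) * (x - y) ^ (p - k - 1) *
        ((p.choose k / p : ℕ) : Ω)‖ ≤ 1 := by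
      refine IsUltrametricDist.norm_sum_le_of_forall_le_of_nonneg zero_le_one fun k _ => ?_
      rw [norm_mul, norm_mul, norm_pow, norm_pow]
      refine mul_le_one₀ (mul_le_one₀ (pow_le_one₀ (norm_nonneg _) (hy.trans hr)) (by positivity)
        (pow_le_one₀ (norm_nonneg _) (hd.trans hr))) (by positivity)
        (IsUltrametricDist.norm_natCast_le_one Ω _)
    refine (mul_le_of_le_one_right (by positivity) this).trans ?_
    gcongr
    exact hy.trans hrc

theorem norm_pow_prime_pow_sub_le (hp : p.Prime) (hpΩ : ‖(p : Ω)‖ = (p : ℝ)⁻¹) {r c : ℝ}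
    (hr : r ≤ 1) (hrc : r ≤ c) (hc : c ≤ 1) {x y : Ω} (hx : ‖x‖ ≤ r) (hy : ‖y‖ ≤ r)
    (hxy : p * ‖x - y‖ ^ (p - 1) ≤ c) (k : ℕ) :
    (p : ℝ) ^ (k + 1) * ‖x ^ p ^ (k + 1) - y ^ p ^ (k + 1)‖ ≤ c * ‖x - y‖ := by
  have hp0 : (0 : ℝ) < p := by exact_mod_cast hp.pos
  have hp1 := one_lt_cast_of_prime hp
  have hc0 : 0 ≤ c := ((norm_nonneg x).trans hx).trans hrc
  induction k generalizing x y with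
  | zero =>
    have := norm_pow_prime_sub_le hp hpΩ hr hrc hx hy hxy
    rw [zero_add, pow_one, pow_one, ← le_div_iff₀' hp0]
    exact this.trans_eq (by ring)
  | succ k ih =>
    have h1 := norm_pow_prime_sub_le hp hpΩ hr hrc hx hy hxy
    have hpow : ∀ z : Ω, ‖z‖ ≤ r → ‖z ^ p‖ ≤ r := fun z hz => by
      rw [norm_pow]
      exact (pow_le_of_le_one (norm_nonneg _) (hz.trans hr) hp.ne_zero).trans hz
    have h2 : ‖x ^ p - y ^ p‖ ≤ (p : ℝ)⁻¹ * ‖x - y‖ := h1.trans (by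
      gcongr
      exact mul_le_of_le_one_right (by positivity) hc)
    have h3 : ‖x ^ p - y ^ p‖ ≤ ‖x - y‖ :=
      h2.trans (mul_le_of_le_one_left (norm_nonneg _) (inv_le_one_of_one_le₀ hp1.le))
    have h4 := ih (hpow x hx) (hpow y hy) (le_trans (by gcongr) hxy)
    rw [← pow_mul, ← pow_mul, ← pow_succ'] at h4
    calc (p : ℝ) ^ (k + 1 + 1) * ‖x ^ p ^ (k + 1 + 1) - y ^ p ^ (k + 1 + 1)‖
        = p * ((p : ℝ) ^ (k + 1) * ‖x ^ p ^ (k + 1 + 1) - y ^ p ^ (k + 1 + 1)‖) := by ring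
      _ ≤ p * (c * ((p : ℝ)⁻¹ * ‖x - y‖)) := by
          exact mul_le_mul_of_nonneg_left (h4.trans (by gcongr)) hp0.le
      _ = c * ‖x - y‖ := by field_simp

/-- The series minus its linear term is contracting at small scales. -/
theorem norm_logSeries_sub_sub_le [CompleteSpace Ω] (hp : p.Prime) (hpΩ : ‖(p : Ω)‖ = (p : ℝ)⁻¹)
    {e : ℕ → Ω} (he : ∀ k, ‖e k‖ ≤ 1) {r c : ℝ}
    (hr : r < 1) (hrc : r ≤ c) (hc : c ≤ 1) {x y : Ω} (hx : ‖x‖ ≤ r) (hy : ‖y‖ ≤ r)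
    (hxy : p * ‖x - y‖ ^ (p - 1) ≤ c) :
    ‖logSeries p e x - logSeries p e y - e 0 * (x - y)‖ ≤ c * ‖x - y‖ := by
  have hc0 : 0 ≤ c := ((norm_nonneg x).trans hx).trans hrc
  have sx := summable_logSeries hp hpΩ he (hx.trans_lt hr)
  have sy := summable_logSeries hp hpΩ he (hy.trans_lt hr)
  have : logSeries p e x - logSeries p e y - e 0 * (x - y) =
      ∑' k : ℕ, e (k + 1) / (p : Ω) ^ (k + 1) * (x ^ p ^ (k + 1) - y ^ p ^ (k + 1)) := by
    rw [logSeries, logSeries, ← sx.tsum_sub sy, (sx.sub sy).tsum_eq_zero_add]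
    simp only [mul_sub]
    simp
  rw [this]
  refine IsUltrametricDist.norm_tsum_le_of_forall_le_of_nonneg (by positivity) fun k => ?_
  rw [norm_div_prime_pow_mul hpΩ]
  exact (mul_le_of_le_one_left (by positivity) (he _)).trans
    (norm_pow_prime_pow_sub_le hp hpΩ hr.le hrc hc hx hy hxy k)

theorem mul_pow_lt_one_of_lt_criticalRadius (hp : p.Prime) {d : ℝ} (h0 : 0 ≤ d)
    (hd : d < criticalRadius p 1) : p * d ^ (p - 1) < 1 := by
  simpa using (lt_criticalRadius_succ_iff hp 0 h0).1 hd

theorem logSeries_injOn_small [CompleteSpace Ω] (hp : p.Prime) (hpΩ : ‖(p : Ω)‖ = (p : ℝ)⁻¹)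
    {e : ℕ → Ω} (he : ∀ k, ‖e k‖ ≤ 1) (he0 : ‖e 0‖ = 1) {x y : Ω} (hx : ‖x‖ < 1) (hy : ‖y‖ < 1)
    (hxy : ‖x - y‖ < criticalRadius p 1) (h : logSeries p e x = logSeries p e y) : x = y := by
  have hd := mul_pow_lt_one_of_lt_criticalRadius hp (norm_nonneg _) hxy
  set r := max ‖x‖ ‖y‖
  have hr : r < 1 := max_lt hx hy
  have hc : max r (p * ‖x - y‖ ^ (p - 1)) < 1 := max_lt hr hd
  have := norm_logSeries_sub_sub_le hp hpΩ he hr (le_max_left _ _) hc.le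
    (le_max_left _ _) (le_max_right _ _) (le_max_right _ _)
  rw [h, sub_self, zero_sub, norm_neg, norm_mul, he0, one_mul] at this
  by_contra hne
  have hpos : 0 < ‖x - y‖ := norm_pos_iff.2 (sub_ne_zero.2 hne)
  nlinarith

/-- An approximate zero is close to a zero. -/
theorem exists_zero_near [CompleteSpace Ω] (hp : p.Prime) (hpΩ : ‖(p : Ω)‖ = (p : ℝ)⁻¹)
    {e : ℕ → Ω} (he : ∀ k, ‖e k‖ ≤ 1) (he0 : ‖e 0‖ = 1) {R : ℝ} (hR : R < 1)
    (hR1 : criticalRadius p 1 ≤ R) {x : Ω} (hx : ‖x‖ ≤ R)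
    (hfx : ‖logSeries p e x‖ < criticalRadius p 1) :
    ∃ y, ‖y‖ ≤ R ∧ ‖x - y‖ < criticalRadius p 1 ∧ logSeries p e y = 0 := by
  set d := ‖logSeries p e x‖
  have hd0 : 0 ≤ d := norm_nonneg _
  have hd := mul_pow_lt_one_of_lt_criticalRadius hp hd0 hfx
  set c := max R (p * d ^ (p - 1))
  have hc : c < 1 := max_lt hR hd
  have hc0 : 0 ≤ c := ((norm_nonneg x).trans hx).trans (le_max_left _ _)
  have e00 : e 0 ≠ 0 := norm_pos_iff.1 (by rw [he0]; exact one_pos)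
  let T : Ω → Ω := fun y => y - logSeries p e y / e 0
  have hball : ∀ y ∈ Metric.closedBall x d, ‖y‖ ≤ R := fun y hy => by
    rw [mem_closedBall_iff_norm] at hy
    rw [← sub_add_cancel y x]
    exact (IsUltrametricDist.norm_add_le_max _ _).trans
      (max_le (hy.trans (hfx.le.trans hR1)) hx)
  have hT : ∀ y ∈ Metric.closedBall x d, ∀ z ∈ Metric.closedBall x d,
      ‖T y - T z‖ ≤ c * ‖y - z‖ := fun y hy z hz => by
    have hyz : ‖y - z‖ ≤ d := by
      rw [← sub_sub_sub_cancel_right y z x]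
      rw [mem_closedBall_iff_norm] at hy hz
      exact (norm_sub_le_max_norm _ _).trans (max_le hy hz)
    have := norm_logSeries_sub_sub_le hp hpΩ he hR (le_max_left _ _) hc.le
      (hball y hy) (hball z hz) (le_trans (by gcongr) (le_max_right R (p * d ^ (p - 1))))
    have hTyz : T y - T z =
        -(logSeries p e y - logSeries p e z - e 0 * (y - z)) / e 0 := by
      simp only [T]; field_simp; ring
    rwa [hTyz, norm_div, norm_neg, he0, div_one]
  have hxT : ‖T x - x‖ ≤ d := by
    simp only [T]
    rw [sub_sub_cancel_left, norm_neg, norm_div, he0, div_one]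
  have hxb : x ∈ Metric.closedBall x d := Metric.mem_closedBall_self hd0
  have hmaps : Set.MapsTo T (Metric.closedBall x d) (Metric.closedBall x d) := fun y hy => by
    have h1 := hT y hy x hxb
    rw [mem_closedBall_iff_norm] at hy ⊢
    rw [← sub_add_sub_cancel (T y) (T x) x]
    exact (IsUltrametricDist.norm_add_le_max _ _).trans (max_le (h1.trans
      ((mul_le_of_le_one_left (norm_nonneg _) hc.le).trans hy)) hxT)
  have hcon : ContractingWith ⟨c, hc0⟩ (hmaps.restrict T _ _) :=
    ⟨hc, LipschitzWith.of_dist_le_mul fun y z => by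
      rw [Subtype.dist_eq, Subtype.dist_eq, dist_eq_norm, dist_eq_norm]
      exact hT y y.2 z z.2⟩
  obtain ⟨y, hy, hfix, -⟩ := hcon.exists_fixedPoint' Metric.isClosed_closedBall.isComplete
    hmaps hxb (edist_ne_top _ _)
  refine ⟨y, hball y hy, ?_, ?_⟩
  · rw [mem_closedBall_iff_norm, norm_sub_rev] at hy
    exact hy.trans_lt hfx
  · have : y - logSeries p e y / e 0 = y := hfix
    rwa [sub_eq_self, div_eq_zero_iff, or_iff_left e00] at this

/-- The zeros of the series in the closed disk of radius `R`. -/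
def zerosInDisk (p : ℕ) (e : ℕ → Ω) (R : ℝ) : Set Ω := {x | ‖x‖ ≤ R ∧ logSeries p e x = 0}

theorem nonempty_zerosInDisk_embedding [CompleteSpace Ω] (hp : p.Prime)
    (hpΩ : ‖(p : Ω)‖ = (p : ℝ)⁻¹) {e e' : ℕ → Ω} (he : ∀ k, ‖e k‖ ≤ 1) (he0 : ‖e 0‖ = 1)
    (he' : ∀ k, ‖e' k‖ ≤ 1) (he0' : ‖e' 0‖ = 1) {R : ℝ} (hR : R < 1)
    (hR1 : criticalRadius p 1 ≤ R)
    (h : ∀ x, ‖x‖ ≤ R → ‖logSeries p e x - logSeries p e' x‖ < criticalRadius p 1) :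
    Nonempty (zerosInDisk p e R ↪ zerosInDisk p e' R) := by
  have key : ∀ x : zerosInDisk p e R, ∃ y : zerosInDisk p e' R,
      ‖(x : Ω) - y‖ < criticalRadius p 1 := fun ⟨x, hx, hfx⟩ => by
    have h1 := h x hx
    rw [hfx, zero_sub, norm_neg] at h1
    obtain ⟨y, hy, hxy, hfy⟩ := exists_zero_near hp hpΩ he' he0' hR hR1 hx h1
    exact ⟨⟨y, hy, hfy⟩, hxy⟩
  choose g hg using key
  refine ⟨⟨g, fun a b hab => Subtype.ext ?_⟩⟩
  refine logSeries_injOn_small hp hpΩ he he0 (a.2.1.trans_lt hR) (b.2.1.trans_lt hR) ?_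
    (a.2.2.trans b.2.2.symm)
  rw [← sub_sub_sub_cancel_right (a : Ω) b (g a)]
  refine (norm_sub_le_max_norm _ _).trans_lt (max_lt (hg a) ?_)
  rw [hab]; exact hg b

theorem card_zerosInDisk_congr [CompleteSpace Ω] (hp : p.Prime)
    (hpΩ : ‖(p : Ω)‖ = (p : ℝ)⁻¹) {e e' : ℕ → Ω} (he : ∀ k, ‖e k‖ ≤ 1) (he0 : ‖e 0‖ = 1)
    (he' : ∀ k, ‖e' k‖ ≤ 1) (he0' : ‖e' 0‖ = 1) {R : ℝ} (hR : R < 1)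
    (hR1 : criticalRadius p 1 ≤ R)
    (h : ∀ x, ‖x‖ ≤ R → ‖logSeries p e x - logSeries p e' x‖ < criticalRadius p 1) :
    Nat.card (zerosInDisk p e R) = Nat.card (zerosInDisk p e' R) := by
  obtain ⟨f⟩ := nonempty_zerosInDisk_embedding hp hpΩ he he0 he' he0' hR hR1 h
  obtain ⟨g⟩ := nonempty_zerosInDisk_embedding hp hpΩ he' he0' he he0 hR hR1
    (fun x hx => by rw [norm_sub_rev]; exact h x hx)
  obtain ⟨i⟩ := f.antisymm g
  exact Nat.card_congr i

end Ultrametric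

section Polynomial

open Polynomial

/-- The value group of an algebraically closed field is dense. -/
theorem exists_norm_between {Ω : Type*} [NontriviallyNormedField Ω] [IsAlgClosed Ω] {a b : ℝ}
    (ha : 0 ≤ a) (hab : a < b) : ∃ y : Ω, a < ‖y‖ ∧ ‖y‖ < b := by
  wlog ha' : 0 < a generalizing a
  · obtain ⟨y, h1, h2⟩ := this (a := b / 2) (by linarith) (by linarith) (by linarith)
    exact ⟨y, by linarith, h2⟩
  obtain ⟨t, ht⟩ := NormedField.exists_one_lt_norm Ω
  obtain ⟨m, hm⟩ := pow_unbounded_of_one_lt ‖t‖ ((one_lt_div ha').2 hab)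
  have hm0 : m ≠ 0 := by rintro rfl; simp at hm; linarith
  rw [div_pow, lt_div_iff₀ (by positivity)] at hm
  obtain ⟨j, hj1, hj2⟩ := exists_mem_Ico_zpow (pow_pos ha' m) ht
  obtain ⟨y, hy⟩ := IsAlgClosed.exists_pow_nat_eq (t ^ (j + 1)) (Nat.pos_of_ne_zero hm0)
  have hy' : ‖y‖ ^ m = ‖t‖ ^ (j + 1) := by rw [← norm_pow, hy, norm_zpow]
  refine ⟨y, lt_of_pow_lt_pow_left₀ m (norm_nonneg _) (hy' ▸ hj2),
    lt_of_pow_lt_pow_left₀ m (ha.trans hab.le) ?_⟩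
  rw [hy', zpow_add_one₀ (by positivity)]
  exact lt_of_le_of_lt (by rw [mul_comm]; gcongr) hm

variable {Ω : Type*}

theorem prod_norm_sub_mul_pow_card_filter [NormedField Ω] [IsUltrametricDist Ω] {a : ℝ} {y z : Ω}
    (hy : a < ‖y‖) (hz : a < ‖z‖) (M : Multiset Ω)
    (hM : ∀ x ∈ M, ‖x‖ ≤ a ∨ (‖y‖ < ‖x‖ ∧ ‖z‖ < ‖x‖)) :
    ‖(M.map (y - ·)).prod‖ * ‖z‖ ^ (M.filter (‖·‖ ≤ a)).card =
      ‖(M.map (z - ·)).prod‖ * ‖y‖ ^ (M.filter (‖·‖ ≤ a)).card := by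
  induction M using Multiset.induction with
  | empty => simp
  | cons x M ih =>
    have ih := ih fun x hx => hM x (Multiset.mem_cons_of_mem hx)
    rw [Multiset.map_cons, Multiset.map_cons, Multiset.prod_cons, Multiset.prod_cons, norm_mul,
      norm_mul]
    by_cases hx : ‖x‖ ≤ a
    · rw [Multiset.filter_cons_of_pos (p := (‖·‖ ≤ a)) _ hx, Multiset.card_cons,
        norm_sub_eq_of_lt (hx.trans_lt hy), norm_sub_eq_of_lt (hx.trans_lt hz), pow_succ, pow_succ]
      linear_combination ‖y‖ * ‖z‖ * ih
    · obtain ⟨h1, h2⟩ := (hM x (Multiset.mem_cons_self x M)).resolve_left hx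
      rw [Multiset.filter_cons_of_neg (p := (‖·‖ ≤ a)) _ hx, norm_sub_rev y, norm_sub_rev z,
        norm_sub_eq_of_lt h1, norm_sub_eq_of_lt h2]
      linear_combination ‖x‖ * ih

/-- The truncation of the series to its first `N` terms. -/
noncomputable def logPoly [Field Ω] (p : ℕ) (e : ℕ → Ω) (N : ℕ) : Polynomial Ω :=
  ∑ k ∈ Finset.range N, C (e k / (p : Ω) ^ k) * X ^ p ^ k

theorem eval_logPoly [NormedField Ω] (p : ℕ) (e : ℕ → Ω) (N : ℕ) (x : Ω) :
    (logPoly p e N).eval x = logSeries p (fun k => if k < N then e k else 0) x := by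
  rw [logSeries, tsum_eq_sum (s := Finset.range N) (fun k hk => by
    rw [Finset.mem_range] at hk; simp [hk]), logPoly, eval_finsetSum]
  refine Finset.sum_congr rfl fun k hk => ?_
  simp [Finset.mem_range.1 hk]

theorem eval_derivative_logPoly_ne_zero [NormedField Ω] [IsUltrametricDist Ω] [CharZero Ω] {p : ℕ}
    (hp : p.Prime) {e : ℕ → Ω} (he : ∀ k, ‖e k‖ = 1) (N : ℕ) {x : Ω} (hx : ‖x‖ < 1) :
    (derivative (logPoly p e (N + 1))).eval x ≠ 0 := by
  have hp0 : (p : Ω) ≠ 0 := by exact_mod_cast hp.ne_zero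
  have : (derivative (logPoly p e (N + 1))).eval x =
      e 0 + ∑ k ∈ Finset.range N, e (k + 1) * x ^ (p ^ (k + 1) - 1) := by
    rw [logPoly, Finset.sum_range_succ', derivative_add, eval_add, add_comm]
    congr 1
    · simp
    · rw [derivative_sum, eval_finsetSum]
      refine Finset.sum_congr rfl fun k _ => ?_
      rw [derivative_C_mul_X_pow, eval_C_mul, eval_X_pow, Nat.cast_pow,
        div_mul_cancel₀ _ (pow_ne_zero _ hp0)]
  rw [this, ← norm_pos_iff]
  have hlt : ‖∑ k ∈ Finset.range N, e (k + 1) * x ^ (p ^ (k + 1) - 1)‖ < 1 := by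
    refine (IsUltrametricDist.norm_sum_le_of_forall_le_of_nonneg (norm_nonneg x)
      fun k _ => ?_).trans_lt hx
    rw [norm_mul, he, one_mul, norm_pow]
    refine pow_le_of_le_one (norm_nonneg x) hx.le ?_
    have : 1 < p ^ (k + 1) := Nat.one_lt_pow k.succ_ne_zero hp.one_lt
    omega
  rw [IsUltrametricDist.norm_add_eq_max_of_norm_ne_norm (by rw [he]; exact hlt.ne'), he]
  positivity

variable [NontriviallyNormedField Ω] [IsUltrametricDist Ω] [CompleteSpace Ω] [IsAlgClosed Ω]
  {p : ℕ}

theorem card_filter_roots_logPoly (hp : p.Prime) (hpΩ : ‖(p : Ω)‖ = (p : ℝ)⁻¹)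
    {e : ℕ → Ω} (he : ∀ k, ‖e k‖ = 1) {s N : ℕ} (hs : s < N) :
    logPoly p e N ≠ 0 ∧
      ((logPoly p e N).roots.filter (‖·‖ ≤ criticalRadius p s)).card = p ^ s := by
  have he' : ∀ k, ‖(fun k => if k < N then e k else 0) k‖ ≤ 1 := fun k => by
    dsimp only; split_ifs <;> simp [he]
  have hes : ‖(fun k => if k < N then e k else 0) s‖ = 1 := by simp [hs, he]
  obtain ⟨z, hz1, hz2⟩ := exists_norm_between (Ω := Ω) (criticalRadius_nonneg p s)
    (criticalRadius_lt_succ hp s)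
  obtain ⟨y, hy1, hy2⟩ := exists_norm_between (Ω := Ω) (norm_nonneg z) hz2
  have hy1' := hz1.trans hy1
  have hz0 : 0 < ‖z‖ := (criticalRadius_nonneg p s).trans_lt hz1
  have hp0 : (0 : ℝ) < p := by exact_mod_cast hp.pos
  have hne : logPoly p e N ≠ 0 := fun h0 =>
    logSeries_ne_zero_of_between hp hpΩ he' hes hz1 hz2 (by rw [← eval_logPoly, h0, eval_zero])
  refine ⟨hne, ?_⟩
  have hM : ∀ x ∈ (logPoly p e N).roots,
      ‖x‖ ≤ criticalRadius p s ∨ (‖y‖ < ‖x‖ ∧ ‖z‖ < ‖x‖) := fun x hx => by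
    have hx0 : logSeries p (fun k => if k < N then e k else 0) x = 0 := by
      rw [← eval_logPoly]; exact (mem_roots hne).1 hx
    by_contra! hcon
    refine logSeries_ne_zero_of_between hp hpΩ he' hes hcon.1 ?_ hx0
    by_contra! hle
    exact (hcon.2 (hy2.trans_le hle)).not_gt (hz2.trans_le hle)
  have key := prod_norm_sub_mul_pow_card_filter hy1' hz1 _ hM
  have hev : ∀ w, ‖(logPoly p e N).leadingCoeff‖ * ‖((logPoly p e N).roots.map (w - ·)).prod‖ =
      ‖logSeries p (fun k => if k < N then e k else 0) w‖ := fun w => by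
    rw [← norm_mul, ← (IsAlgClosed.splits (logPoly p e N)).eval_eq_prod_roots, eval_logPoly]
  set m := ((logPoly p e N).roots.filter (‖·‖ ≤ criticalRadius p s)).card
  have hy := hev y
  have hz := hev z
  rw [norm_logSeries_of_between hp hpΩ he' hes hy1' hy2] at hy
  rw [norm_logSeries_of_between hp hpΩ he' hes hz1 hz2] at hz
  have h1 : (p : ℝ) ^ s * (‖y‖ ^ p ^ s * ‖z‖ ^ m) = (p : ℝ) ^ s * (‖z‖ ^ p ^ s * ‖y‖ ^ m) := by
    rw [← mul_assoc, ← mul_assoc, ← hy, ← hz, mul_assoc, mul_assoc, key]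
  have h2 := mul_left_cancel₀ (by positivity) h1
  have h3 : (‖y‖ / ‖z‖) ^ m = (‖y‖ / ‖z‖) ^ p ^ s := by
    rw [div_pow, div_pow, div_eq_div_iff (by positivity) (by positivity)]
    linear_combination -h2
  exact pow_right_injective₀ (div_pos (hz0.trans hy1) hz0) ((one_lt_div hz0).2 hy1).ne' h3

theorem card_zerosInDisk_truncation [CharZero Ω] (hp : p.Prime) (hpΩ : ‖(p : Ω)‖ = (p : ℝ)⁻¹)
    {e : ℕ → Ω} (he : ∀ k, ‖e k‖ = 1) {s N : ℕ} (hs : s < N) :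
    Nat.card (zerosInDisk p (fun k => if k < N then e k else 0) (criticalRadius p s)) = p ^ s := by
  classical
  obtain ⟨hne, hcard⟩ := card_filter_roots_logPoly hp hpΩ he hs
  obtain ⟨N, rfl⟩ := Nat.exists_eq_add_one_of_ne_zero (by omega : N ≠ 0)
  set M := (logPoly p e (N + 1)).roots.filter (‖·‖ ≤ criticalRadius p s) with hMdef
  have hnodup : M.Nodup := by
    refine Multiset.nodup_iff_count_le_one.2 fun x => ?_
    by_contra! hx
    have hxM : x ∈ M := Multiset.count_pos.1 (by omega)
    have hx1 := hx.trans_le (Multiset.count_le_of_le x (Multiset.filter_le _ _))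
    rw [count_roots, one_lt_rootMultiplicity_iff_isRoot hne] at hx1
    exact eval_derivative_logPoly_ne_zero hp he N
      ((Multiset.mem_filter.1 hxM).2.trans_lt (criticalRadius_lt_one hp s)) hx1.2
  have hset : zerosInDisk p (fun k => if k < N + 1 then e k else 0) (criticalRadius p s) =
      (M.toFinset : Set Ω) := by
    ext x
    simp only [zerosInDisk, Set.mem_ofPred_eq, ← eval_logPoly, Finset.mem_coe,
      Multiset.mem_toFinset, hMdef, Multiset.mem_filter, mem_roots hne, IsRoot.def]
    exact and_comm
  rw [hset, Nat.card_coe_set_eq, Set.ncard_coe_finset, Multiset.toFinset_card_of_nodup hnodup,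
    hcard]

theorem card_zerosInDisk [CharZero Ω] (hp : p.Prime) (hpΩ : ‖(p : Ω)‖ = (p : ℝ)⁻¹)
    {e : ℕ → Ω} (he : ∀ k, ‖e k‖ = 1) (s : ℕ) :
    Nat.card (zerosInDisk p e (criticalRadius p s)) = p ^ s := by
  rcases Nat.eq_zero_or_pos s with rfl | hs
  · have : zerosInDisk p e (criticalRadius p 0) = {0} := by
      ext x
      simp only [zerosInDisk, criticalRadius, norm_le_zero_iff, Set.mem_ofPred_eq,
        Set.mem_singleton_iff, and_iff_left_iff_imp]
      rintro rfl
      simp [logSeries, hp.ne_zero]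
    rw [this]; simp
  set R := criticalRadius p s
  have hR : R < 1 := criticalRadius_lt_one hp s
  have hR0 : 0 ≤ R := criticalRadius_nonneg p s
  have hc1 := criticalRadius_succ_pos hp 0
  rw [zero_add] at hc1
  obtain ⟨N₀, hN₀⟩ := eventually_atTop.1
    ((tendsto_mul_pow_pow hp hR0 hR).eventually_lt_const (half_pos hc1))
  set N := max N₀ (s + 1)
  have he' : ∀ k, ‖(fun k => if k < N then e k else 0) k‖ ≤ 1 := fun k => by
    dsimp only; split_ifs <;> simp [he]
  have hsN : s < N := lt_of_lt_of_le s.lt_succ_self (le_max_right _ _)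
  rw [← card_zerosInDisk_truncation hp hpΩ he hsN]
  refine card_zerosInDisk_congr hp hpΩ (fun k => (he k).le) (he 0) he'
    (by simp [he, (Nat.zero_le s).trans_lt hsN]) hR ((criticalRadius_strictMono hp).monotone hs)
    fun x hx => ?_
  rw [logSeries, logSeries, ← (summable_logSeries hp hpΩ (fun k => (he k).le)
    (hx.trans_lt hR)).tsum_sub (summable_logSeries hp hpΩ he' (hx.trans_lt hR))]
  refine (IsUltrametricDist.norm_tsum_le_of_forall_le_of_nonneg (half_pos hc1).le
    fun k => ?_).trans_lt (half_lt_self hc1)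
  by_cases hk : k < N
  · simpa [hk] using (half_pos hc1).le
  · rw [if_neg hk, zero_div, zero_mul, sub_zero, norm_div_prime_pow_mul hpΩ, he, one_mul, norm_pow]
    have := hN₀ k ((le_max_left _ _).trans (not_lt.1 hk))
    exact le_trans (by gcongr) this.le

end Polynomial

/-- Every nonzero zero of the series has critical absolute value. -/
theorem exists_norm_eq_criticalRadius {Ω : Type*} [NormedField Ω] [IsUltrametricDist Ω]
    [CompleteSpace Ω] {p : ℕ} (hp : p.Prime) (hpΩ : ‖(p : Ω)‖ = (p : ℝ)⁻¹)
    {e : ℕ → Ω} (he : ∀ k, ‖e k‖ = 1) {n : ℕ} {x : Ω} (hx : ‖x‖ ≤ criticalRadius p n)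
    (hfx : logSeries p e x = 0) : ∃ s ≤ n, ‖x‖ = criticalRadius p s := by
  induction n with
  | zero => exact ⟨0, le_rfl, le_antisymm hx (norm_nonneg x)⟩
  | succ n ih =>
    rcases hx.eq_or_lt with h | h
    · exact ⟨n + 1, le_rfl, h⟩
    · obtain ⟨s, hs, hxs⟩ := ih (not_lt.1 fun h1 =>
        logSeries_ne_zero_of_between hp hpΩ (fun k => (he k).le) (he n) h1 h hfx)
      exact ⟨s, hs.trans n.le_succ, hxs⟩

/-- The zeros on a critical circle. -/
theorem card_zeros_norm_eq_criticalRadius {Ω : Type*} [NontriviallyNormedField Ω]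
    [IsUltrametricDist Ω] [CompleteSpace Ω] [IsAlgClosed Ω] [CharZero Ω] {p : ℕ} (hp : p.Prime)
    (hpΩ : ‖(p : Ω)‖ = (p : ℝ)⁻¹) {e : ℕ → Ω} (he : ∀ k, ‖e k‖ = 1) (s : ℕ) :
    {x : Ω | logSeries p e x = 0 ∧ ‖x‖ = criticalRadius p (s + 1)}.ncard =
      p ^ (s + 1) - p ^ s := by
  have hlt := criticalRadius_lt_succ hp s
  have h1 := card_zerosInDisk hp hpΩ he s
  have h2 := card_zerosInDisk hp hpΩ he (s + 1)
  have : {x : Ω | logSeries p e x = 0 ∧ ‖x‖ = criticalRadius p (s + 1)} =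
      zerosInDisk p e (criticalRadius p (s + 1)) \ zerosInDisk p e (criticalRadius p s) := by
    ext x
    simp only [zerosInDisk, Set.mem_ofPred_eq, Set.mem_sdiff, not_and]
    constructor
    · rintro ⟨hfx, hx⟩
      exact ⟨⟨hx.le, hfx⟩, fun h => absurd (hx ▸ h) (not_le.2 hlt)⟩
    · rintro ⟨⟨hx, hfx⟩, h⟩
      refine ⟨hfx, hx.eq_of_not_lt fun hx' => ?_⟩
      exact logSeries_ne_zero_of_between hp hpΩ (fun k => (he k).le) (he s)
        (not_le.1 fun h' => h h' hfx) hx' hfx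
  have hfin : (zerosInDisk p e (criticalRadius p s)).Finite :=
    Nat.finite_of_card_ne_zero (by rw [h1]; exact (pow_pos hp.pos s).ne')
  have hsub : zerosInDisk p e (criticalRadius p s) ⊆ zerosInDisk p e (criticalRadius p (s + 1)) :=
    fun x hx => ⟨hx.1.trans hlt.le, hx.2⟩
  rw [this, Set.ncard_sdiff hsub hfin,
    ← Nat.card_coe_set_eq, ← Nat.card_coe_set_eq, h1, h2]

/-- Let `l(X) = ∑_{k≥0} (e_k/p^k) X^{p^k}` with all
`e_k ∈ O_K^*` (i.e. `‖e k‖ = 1`).  We work in a field `Ω` containing all the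
relevant roots ("a sufficiently large extension": a complete algebraically
closed ultrametric field with `‖p‖ = 1/p`, e.g. `ℂ_p`), and set
`T_n = {π : ‖π‖ ≤ |p|^{1/(p^n − p^{n−1})}, l(π) = 0}`.  Then:
`|T_n| = p^n`; every nonzero `π ∈ T_n` has `‖π‖ = |p|^{1/(p^s − p^{s−1})}`
for some `1 ≤ s ≤ n`; and for each such `s` the number of `π ∈ T_n` with
`‖π‖ = |p|^{1/(p^s − p^{s−1})}` is exactly `p^s − p^{s−1}`. -/
theorem newton_polygon_torsion_count
    (p : ℕ) (hp : p.Prime)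
    (Ω : Type*) [NontriviallyNormedField Ω] [IsUltrametricDist Ω]
    [CompleteSpace Ω] [IsAlgClosed Ω] [CharZero Ω]
    (hpΩ : ‖(p : Ω)‖ = (p : ℝ)⁻¹)
    (e : ℕ → Ω) (he : ∀ k, ‖e k‖ = 1)
    (n : ℕ) (hn : 1 ≤ n) :
    Nat.card {π : Ω //
        ‖π‖ ≤ ‖(p : Ω)‖ ^ ((1 : ℝ) / ((p : ℝ) ^ n - (p : ℝ) ^ (n - 1))) ∧
        (∑' k : ℕ, e k / (p : Ω) ^ k * π ^ p ^ k) = 0} = p ^ n ∧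
    (∀ π : Ω,
        ‖π‖ ≤ ‖(p : Ω)‖ ^ ((1 : ℝ) / ((p : ℝ) ^ n - (p : ℝ) ^ (n - 1))) →
        (∑' k : ℕ, e k / (p : Ω) ^ k * π ^ p ^ k) = 0 → π ≠ 0 →
        ∃ s : ℕ, 1 ≤ s ∧ s ≤ n ∧
          ‖π‖ = ‖(p : Ω)‖ ^ ((1 : ℝ) / ((p : ℝ) ^ s - (p : ℝ) ^ (s - 1)))) ∧
    ∀ s : ℕ, 1 ≤ s → s ≤ n →
      Nat.card {π : Ω //
          (∑' k : ℕ, e k / (p : Ω) ^ k * π ^ p ^ k) = 0 ∧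
          ‖π‖ = ‖(p : Ω)‖ ^ ((1 : ℝ) / ((p : ℝ) ^ s - (p : ℝ) ^ (s - 1)))} =
        p ^ s - p ^ (s - 1) := by
  obtain ⟨n, rfl⟩ := Nat.exists_eq_add_one_of_ne_zero (by omega : n ≠ 0)
  have hrad : ∀ s : ℕ, 1 ≤ s →
      ‖(p : Ω)‖ ^ ((1 : ℝ) / ((p : ℝ) ^ s - (p : ℝ) ^ (s - 1))) = criticalRadius p s := by
    intro s hs
    obtain ⟨s, rfl⟩ := Nat.exists_eq_add_one_of_ne_zero (by omega : s ≠ 0)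
    rw [hpΩ]; rfl
  rw [hrad _ hn]
  refine ⟨card_zerosInDisk hp hpΩ he (n + 1), fun x hx hfx hx0 => ?_, fun s hs _ => ?_⟩
  · obtain ⟨s, hs, hxs⟩ := exists_norm_eq_criticalRadius hp hpΩ he hx hfx
    have hs1 : 1 ≤ s := Nat.one_le_iff_ne_zero.2 (by
      rintro rfl
      exact hx0 (norm_eq_zero.1 hxs))
    exact ⟨s, hs1, hs, by rw [hrad s hs1, hxs]⟩
  · rw [hrad s hs]
    obtain ⟨s, rfl⟩ := Nat.exists_eq_add_one_of_ne_zero (by omega : s ≠ 0)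
    exact card_zeros_norm_eq_criticalRadius hp hpΩ he s
end
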